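/- arXiv:2206.06542 — 3 statements merged into one kernel-verified Lean document; each statement's English description precedes it below -/
import Mathlib

section
/- Let T be a finite nonempty tree and let w be a function from the edge set of T to the integers satisfying the Gauss–Bonnet vertex condition: for every vertex v, the sum of w(e) over all edges e incident to v equals 2 − deg(v). Then w(e) is odd for every edge e of T. -/
/-!
The Gauss–Bonnet condition at `v` says that `w + 1` sums to `2` over the edges at `v`. On a forest
with finite components, an edge weighting whose vertex sums all lie in a subgroup `S` takes all its
values in `S` (here `S = 2ℤ`): otherwise the edges with weight outside `S` form a nonempty forest,
which has a leaf, and the sum at that leaf has exactly one term outside `S`.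
-/

section Forest

variable {V : Type*} {G : SimpleGraph V}

lemma exists_existsUnique_adj_of_isAcyclic (hG : G.IsAcyclic) {a b : V} (hab : G.Adj a b)
    (hfin : (G.connectedComponentMk a).supp.Finite) : ∃ v, ∃! x, G.Adj v x := by
  classical
  let c := G.connectedComponentMk a
  have hb : b ∈ c.supp := c.mem_supp_of_adj_mem_supp rfl hab
  have : Fintype c := hfin.fintype
  have : Nontrivial c := ⟨⟨a, rfl⟩, ⟨b, hb⟩, fun h => hab.ne (congrArg Subtype.val h)⟩
  obtain ⟨v, hdeg⟩ := (hG.isTree_connectedComponent c).exists_vert_degree_one_of_nontrivial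
  obtain ⟨x, hvx, huniq⟩ := SimpleGraph.degree_eq_one_iff_existsUnique_adj.mp hdeg
  refine ⟨v, x, hvx, fun y hvy => ?_⟩
  have hy : y ∈ c.supp := c.mem_supp_of_adj_mem_supp v.2 hvy
  exact congrArg Subtype.val (huniq ⟨y, hy⟩ hvy)

lemma mem_of_sum_incidenceFinset_mem [DecidableEq V] [G.LocallyFinite] {A : Type*} [AddCommGroup A]
    (S : AddSubgroup A) {f : Sym2 V → A} (hG : G.IsAcyclic)
    (hfin : ∀ c : G.ConnectedComponent, c.supp.Finite)
    (hsum : ∀ v, ∑ e ∈ G.incidenceFinset v, f e ∈ S) {e : Sym2 V} (he : e ∈ G.edgeSet) :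
    f e ∈ S := by
  induction e using Sym2.ind with
  | _ a b =>
    by_contra hfe
    let H := G.deleteEdges {e | f e ∈ S}
    have hHG : H ≤ G := G.deleteEdges_le _
    have hab : H.Adj a b := SimpleGraph.deleteEdges_adj.mpr ⟨he, hfe⟩
    have hHfin : (H.connectedComponentMk a).supp.Finite :=
      (hfin (G.connectedComponentMk a)).subset
        ((G.connectedComponentMk a).connectedComponentMk_supp_subset_supp hHG rfl)
    obtain ⟨v, x, hvx, huniq⟩ :=
      exists_existsUnique_adj_of_isAcyclic (hG.anti hHG) hab hHfin
    obtain ⟨hGvx, hfx⟩ := SimpleGraph.deleteEdges_adj.mp hvx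
    have hmem : s(v, x) ∈ G.incidenceFinset v := by
      simpa [SimpleGraph.mk'_mem_incidenceSet_iff] using hGvx
    have hrest : ∑ e ∈ (G.incidenceFinset v).erase s(v, x), f e ∈ S := by
      refine S.sum_mem fun e he => ?_
      rw [Finset.mem_erase, SimpleGraph.mem_incidenceFinset] at he
      obtain ⟨hne, hGe, hve⟩ := he
      obtain ⟨y, rfl⟩ := Sym2.mem_iff_exists.mp hve
      by_contra hfy
      exact hne (by rw [huniq y (SimpleGraph.deleteEdges_adj.mpr ⟨hGe, hfy⟩)])
    have hsum_v := hsum v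
    rw [← Finset.add_sum_erase _ _ hmem, S.add_mem_cancel_right hrest] at hsum_v
    exact hfx hsum_v

end Forest

theorem tree_gaussBonnet_weights_odd_general {V : Type*} [DecidableEq V]
    (G : SimpleGraph V) [G.LocallyFinite] (hG : G.IsAcyclic)
    (hfin : ∀ c : G.ConnectedComponent, c.supp.Finite) (w : Sym2 V → ℤ)
    (h : ∀ v : V, ∑ e ∈ G.incidenceFinset v, w e = 2 - (G.degree v : ℤ)) :
    ∀ e ∈ G.edgeSet, Odd (w e) := by
  intro e he
  have hsum (v : V) : ∑ e ∈ G.incidenceFinset v, (w e + 1) = 2 := by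
    simp [Finset.sum_add_distrib, h v]
  have hmem : w e + 1 ∈ AddSubgroup.zmultiples (2 : ℤ) :=
    mem_of_sum_incidenceFinset_mem (f := fun e => w e + 1) _ hG hfin
      (fun v => by rw [hsum v]; exact AddSubgroup.mem_zmultiples 2) he
  rwa [Int.mem_zmultiples_iff, ← even_iff_two_dvd, Int.even_add_one, Int.not_even_iff_odd] at hmem

/-- **Oddness of Gauss–Bonnet weights on a tree.**
If `T` is a finite nonempty tree and `w` is an integer weighting of its edges such that
at every vertex `v` the incident edge weights sum to `2 - deg v`, then every edge
weight is odd. -/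
theorem tree_gaussBonnet_weights_odd {V : Type*} [Fintype V] [Nonempty V] [DecidableEq V]
    (G : SimpleGraph V) [DecidableRel G.Adj] (hT : G.IsTree)
    (w : Sym2 V → ℤ)
    (h : ∀ v : V, ∑ e ∈ G.incidenceFinset v, w e = 2 - (G.degree v : ℤ)) :
    ∀ e ∈ G.edgeFinset, Odd (w e) := by
  simpa only [SimpleGraph.mem_edgeFinset] using
    tree_gaussBonnet_weights_odd_general G hT.isAcyclic (fun c => c.supp.toFinite) w h
end

section
/- Every finite tree T admits a subset S of its edge set such that every vertex of T of degree at least 2 is incident to exactly one edge belonging to S. -/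
/-!
Root every component of the forest and let every vertex that has children prefer one of them. The
preferred edges form vertex-disjoint descending paths, and `S` takes every second edge of each path,
beginning with the topmost one. A vertex with two neighbours has a child, so its path continues
below it; as the edges of the path alternate, exactly one of its path edges is in `S`.
-/

open Relator SimpleGraph

section Relation

variable {α : Type*} {r : α → α → Prop}

theorem exists_kernel_of_wellFounded (hr : WellFounded r) :
    ∃ K : Set α, ∀ a, a ∈ K ↔ ∀ b, r b a → b ∉ K := by
  let inKernel : α → Prop := hr.fix fun a ih ↦ ∀ b, ∀ h : r b a, ¬ ih b h
  exact ⟨{a | inKernel a}, fun a ↦ iff_of_eq (hr.fix_eq _ a)⟩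

theorem exists_rightUnique_subrelation (r : α → α → Prop) :
    ∃ s : α → α → Prop, Subrelation s r ∧ RightUnique s ∧ ∀ a b, r a b → ∃ c, s a c := by
  refine ⟨fun a c ↦ ∃ h : ∃ b, r a b, h.choose = c, ?_, ?_, ?_⟩
  · rintro a _ ⟨h, rfl⟩
    exact h.choose_spec
  · rintro a _ _ ⟨_, rfl⟩ ⟨_, rfl⟩
    rfl
  · exact fun a b hab ↦ ⟨_, ⟨b, hab⟩, rfl⟩

theorem exists_edges_existsUnique_mem_of_biUnique (hwf : WellFounded r) (hr : BiUnique r) :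
    ∃ S : Set (Sym2 α), (∀ e ∈ S, ∃ a b, r a b ∧ s(a, b) = e) ∧
      ∀ a b, r a b → ∃! e, e ∈ S ∧ a ∈ e := by
  obtain ⟨K, hK⟩ := exists_kernel_of_wellFounded hwf
  refine ⟨{e | ∃ a ∈ K, ∃ b, r a b ∧ s(a, b) = e}, fun e ⟨a, _, b, he⟩ ↦ ⟨a, b, he⟩,
    fun a b hab ↦ ?_⟩
  by_cases ha : a ∈ K
  · refine ⟨s(a, b), ⟨⟨a, ha, b, hab, rfl⟩, Sym2.mem_mk_left a b⟩, ?_⟩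
    rintro _ ⟨⟨c, hc, d, hcd, rfl⟩, hmem⟩
    obtain rfl | rfl := Sym2.mem_iff.1 hmem
    · rw [hr.2 hab hcd]
    · exact absurd hc ((hK a).1 ha c hcd)
  · obtain ⟨p, hpa, hp⟩ : ∃ p, r p a ∧ p ∈ K := by
      simpa only [hK a, not_forall, not_not, exists_prop] using ha
    refine ⟨s(p, a), ⟨⟨p, hp, a, hpa, rfl⟩, Sym2.mem_mk_right p a⟩, ?_⟩
    rintro _ ⟨⟨c, hc, d, hcd, rfl⟩, hmem⟩
    obtain rfl | rfl := Sym2.mem_iff.1 hmem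
    · exact absurd hc ha
    · rw [hr.1 hcd hpa]

theorem exists_edges_existsUnique_mem_of_leftUnique (hwf : WellFounded r) (hr : LeftUnique r) :
    ∃ S : Set (Sym2 α), (∀ e ∈ S, ∃ a b, r a b ∧ s(a, b) = e) ∧
      ∀ a b, r a b → ∃! e, e ∈ S ∧ a ∈ e := by
  obtain ⟨s, hsr, hs, hdom⟩ := exists_rightUnique_subrelation r
  obtain ⟨S, hS, hunique⟩ := exists_edges_existsUnique_mem_of_biUnique (hsr.wf hwf)
    ⟨fun _ _ _ hac hbc ↦ hr (hsr hac) (hsr hbc), hs⟩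
  refine ⟨S, fun e he ↦ ?_, fun a b hab ↦ ?_⟩
  · obtain ⟨a, b, hab, rfl⟩ := hS e he
    exact ⟨a, b, hsr hab, rfl⟩
  · obtain ⟨c, hac⟩ := hdom a b hab
    exact hunique a c hac

end Relation

section Forest

variable {V : Type*} {G : SimpleGraph V}

/-- The root of the connected component of `v`: an arbitrarily chosen vertex of the component. -/
noncomputable def componentRoot (G : SimpleGraph V) (v : V) : V :=
  (G.connectedComponentMk v).out

/-- `IsParent G u v` says that `u` is a parent of `v` when each component of `G` is rooted at its
`componentRoot`, that is, `u` is a neighbour of `v` one step closer to the root. -/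
def IsParent (G : SimpleGraph V) (u v : V) : Prop :=
  G.Adj u v ∧ G.dist (componentRoot G v) v = G.dist (componentRoot G u) u + 1

theorem componentRoot_reachable (G : SimpleGraph V) (v : V) : G.Reachable (componentRoot G v) v :=
  ConnectedComponent.exact (Quot.out_eq _)

theorem componentRoot_eq_of_adj {u v : V} (h : G.Adj u v) :
    componentRoot G u = componentRoot G v :=
  congrArg Quot.out (ConnectedComponent.sound h.reachable)

theorem wellFounded_isParent (G : SimpleGraph V) : WellFounded (IsParent G) :=
  Subrelation.wf (fun h ↦ Nat.lt_of_lt_of_eq (Nat.lt_succ_self _) h.2.symm)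
    (measure fun v ↦ G.dist (componentRoot G v) v).wf

theorem isParent_or_isParent_of_adj (hG : G.IsAcyclic) {u v : V} (h : G.Adj u v) :
    IsParent G u v ∨ IsParent G v u := by
  have hdist := hG.dist_eq_dist_add_one_of_adj_of_reachable (componentRoot G u) h
    (componentRoot_reachable G u)
  have hroot := componentRoot_eq_of_adj h
  exact hdist.symm.imp (fun hd ↦ ⟨h, hroot ▸ hd⟩) (fun hd ↦ ⟨h.symm, hroot ▸ hd⟩)

theorem IsParent.exists_isPath_penultimate_eq {u v : V} (h : IsParent G u v) :
    ∃ p : G.Walk (componentRoot G v) v, p.IsPath ∧ p.penultimate = u := by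
  obtain ⟨hadj, hdist⟩ := h
  rw [componentRoot_eq_of_adj hadj] at hdist
  have hreach := (componentRoot_reachable G v).trans hadj.symm.reachable
  obtain ⟨p, hp⟩ := hreach.exists_walk_length_eq_dist
  refine ⟨p.concat hadj, Walk.isPath_of_length_eq_dist _ ?_, p.penultimate_concat hadj⟩
  rw [Walk.length_concat, hp, hdist]

theorem leftUnique_isParent (hG : G.IsAcyclic) : LeftUnique (IsParent G) := by
  intro u w v hu hw
  obtain ⟨p, hp, rfl⟩ := hu.exists_isPath_penultimate_eq
  obtain ⟨q, hq, rfl⟩ := hw.exists_isPath_penultimate_eq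
  have hpq : p = q := congrArg Subtype.val ((hG.subsingleton_path _ v).elim ⟨p, hp⟩ ⟨q, hq⟩)
  rw [hpq]

theorem exists_isParent_of_neighborSet_nontrivial (hG : G.IsAcyclic) {v : V}
    (hv : (G.neighborSet v).Nontrivial) : ∃ w, IsParent G v w := by
  obtain ⟨a, ha, b, hb, hab⟩ := hv
  obtain hva | hav := isParent_or_isParent_of_adj hG ha
  · exact ⟨a, hva⟩
  obtain hvb | hbv := isParent_or_isParent_of_adj hG hb
  · exact ⟨b, hvb⟩
  exact absurd (leftUnique_isParent hG hav hbv) hab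

end Forest

theorem tree_consistent_labeling_general {V : Type*} (G : SimpleGraph V) (hG : G.IsAcyclic) :
    ∃ S : Set (Sym2 V), S ⊆ G.edgeSet ∧
      ∀ v : V, (G.neighborSet v).Nontrivial → (S ∩ G.incidenceSet v).encard = 1 := by
  obtain ⟨S, hS, hunique⟩ := exists_edges_existsUnique_mem_of_leftUnique
    (wellFounded_isParent G) (leftUnique_isParent hG)
  have hSG : S ⊆ G.edgeSet := by
    intro e he
    obtain ⟨u, v, huv, rfl⟩ := hS e he
    exact huv.1
  refine ⟨S, hSG, fun v hv ↦ ?_⟩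
  obtain ⟨w, hvw⟩ := exists_isParent_of_neighborSet_nontrivial hG hv
  obtain ⟨e, ⟨heS, hve⟩, he⟩ := hunique v w hvw
  refine Set.encard_eq_one.2 ⟨e, Set.eq_singleton_iff_unique_mem.2 ⟨⟨heS, hSG heS, hve⟩, ?_⟩⟩
  exact fun e' he' ↦ he e' ⟨he'.1, he'.2.2⟩

/-- **Existence of a consistent labeling (black-square decomposition).**
Every finite tree admits a set `S` of its edges such that every vertex of degree at
least `2` is incident to exactly one edge of `S`. -/
theorem tree_consistent_labeling {V : Type*} [Fintype V] [DecidableEq V]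
    (G : SimpleGraph V) [DecidableRel G.Adj] (hT : G.IsTree) :
    ∃ S : Finset (Sym2 V), S ⊆ G.edgeFinset ∧
      ∀ v : V, 2 ≤ G.degree v → (S ∩ G.incidenceFinset v).card = 1 := by
  obtain ⟨S, hS, h⟩ := tree_consistent_labeling_general G hT.isAcyclic
  lift S to Finset (Sym2 V) using S.toFinite
  refine ⟨S, by rwa [← Finset.coe_subset, coe_edgeFinset], fun v hv ↦ ?_⟩
  have hcard := h v (G.coe_neighborFinset v ▸ Finset.one_lt_card_iff_nontrivial.1 hv)
  rwa [← coe_incidenceFinset, ← Finset.coe_inter, Set.encard_coe_eq_coe_finsetCard,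
    Nat.cast_eq_one] at hcard
end

section
/- Let T be a finite tree and let ε be a function assigning to each edge of T a sign in {+1, −1}. Then there exist a function s from the vertices of T to Bool with s(u) ≠ s(v) for every pair of adjacent vertices u, v, and an injective function z from the vertices of T to the integers, such that for every edge e = {u, v} with s(u) = true and s(v) = false, one has z(u) < z(v) if and only if ε(e) = +1. -/
/-!
Rank the vertices of a forest injectively by natural numbers so that every vertex has at most one
neighbor of smaller rank, and give each vertex plus or minus its rank as height. Along an edge, the
endpoint of larger rank has the larger height in absolute value, so its sign alone decides which
endpoint is higher; since it has only one neighbor of smaller rank, that sign is free to be chosen.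
Hence every orientation of a countable forest is induced by an injective integer height.

To obtain the ranking, fix a root in every component and let the rank of `v` be a code of the list
of vertices on the path from `v` to its root: the code of a list exceeds the code of its tail.
-/

open Function SimpleGraph

section Forest

variable {V : Type*} {G : SimpleGraph V}

/-- A ranking of the vertices by distinct natural numbers that witnesses that `G` is 1-degenerate:
each vertex has at most one neighbor of smaller rank. -/
structure IsOneDegenerateRank (G : SimpleGraph V) (rank : V → ℕ) : Prop where
  injective : Injective rank
  eq_of_adj_of_lt : ∀ ⦃v u w : V⦄, G.Adj v u → G.Adj v w → rank u < rank v → rank w < rank v → u = w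

open scoped Classical in
/-- The height `± rank v` of a vertex, negative exactly when `v` has to lie below a neighbor of
smaller rank. The relation `below` is an orientation of the edges: `below u v` asks for `u` to be
lower than `v`. -/
noncomputable def signedRank (G : SimpleGraph V) (rank : V → ℕ) (below : V → V → Prop)
    (v : V) : ℤ :=
  if ∃ u, G.Adj v u ∧ rank u < rank v ∧ below v u then -(rank v : ℤ) else rank v

section SignedRank

variable {rank : V → ℕ} {below : V → V → Prop}

theorem natAbs_signedRank (v : V) : (signedRank G rank below v).natAbs = rank v := by
  unfold signedRank
  split_ifs <;> simp

theorem signedRank_injective (hrank : Injective rank) : Injective (signedRank G rank below) := by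
  refine Injective.of_comp (f := Int.natAbs) ?_
  simpa only [comp_def, natAbs_signedRank] using hrank

theorem IsOneDegenerateRank.signedRank_eq_ite_of_adj_of_lt [DecidableRel below]
    (hrank : IsOneDegenerateRank G rank) {u v : V} (hvu : G.Adj v u) (hlt : rank u < rank v) :
    signedRank G rank below v = if below v u then -(rank v : ℤ) else rank v := by
  have lower_iff : (∃ w, G.Adj v w ∧ rank w < rank v ∧ below v w) ↔ below v u := by
    refine ⟨fun ⟨w, hvw, hw, hbelow⟩ ↦ ?_, fun hbelow ↦ ⟨u, hvu, hlt, hbelow⟩⟩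
    rwa [hrank.eq_of_adj_of_lt hvu hvw hlt hw]
  simp only [signedRank, lower_iff]

theorem IsOneDegenerateRank.signedRank_lt_iff_of_adj (hrank : IsOneDegenerateRank G rank)
    (hbelow : ∀ u v, G.Adj u v → (below u v ↔ ¬ below v u)) {u v : V} (huv : G.Adj u v) :
    signedRank G rank below u < signedRank G rank below v ↔ below u v := by
  classical
  have hu : (signedRank G rank below u).natAbs = rank u := natAbs_signedRank u
  have hv : (signedRank G rank below v).natAbs = rank v := natAbs_signedRank v
  rcases lt_or_gt_of_ne (hrank.injective.ne huv.ne) with hlt | hlt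
  · rw [hbelow u v huv, hrank.signedRank_eq_ite_of_adj_of_lt huv.symm hlt]
    split_ifs with h <;> simp only [h, not_true, not_false_eq_true, iff_true, iff_false] <;> omega
  · rw [hrank.signedRank_eq_ite_of_adj_of_lt huv hlt]
    split_ifs with h <;> simp only [h, iff_true, iff_false] <;> omega

end SignedRank

theorem support_eq_cons_of_notMem_support (hG : G.IsAcyclic) {u v r : V} (huv : G.Adj u v)
    {p : G.Walk u r} {q : G.Walk v r} (hp : p.IsPath) (hq : q.IsPath) (hu : u ∉ q.support) :
    p.support = u :: q.support := by
  have path_eq : (⟨p, hp⟩ : G.Path u r) = ⟨.cons huv q, hq.cons hu⟩ :=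
    (hG.subsingleton_path u r).elim _ _
  rw [Subtype.mk.inj path_eq, Walk.support_cons]

theorem support_eq_cons_or_support_eq_cons_of_adj (hG : G.IsAcyclic) {u v r : V}
    (huv : G.Adj u v) {p : G.Walk u r} {q : G.Walk v r} (hp : p.IsPath) (hq : q.IsPath) :
    p.support = u :: q.support ∨ q.support = v :: p.support := by
  by_cases hu : u ∈ q.support
  · have hv : v ∉ p.support := by
      simpa using hG.ne_mem_support_of_support_of_adj_of_isPath hq.reverse hp.reverse huv.symm
        (by simpa using hu)
    exact .inr (support_eq_cons_of_notMem_support hG huv.symm hq hp hv)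
  · exact .inl (support_eq_cons_of_notMem_support hG huv hp hq hu)

theorem exists_reachable_root_eq_of_adj (G : SimpleGraph V) :
    ∃ root : V → V, (∀ v, G.Reachable v (root v)) ∧ ∀ u v, G.Adj u v → root u = root v :=
  ⟨fun v ↦ (G.connectedComponentMk v).out,
    fun v ↦ (ConnectedComponent.exact (G.connectedComponentMk v).out_eq).symm,
    fun _ _ huv ↦ congrArg Quot.out (ConnectedComponent.connectedComponentMk_eq_of_adj huv)⟩

theorem encode_lt_encode_cons {α : Type*} [Encodable α] (a : α) (l : List α) :
    Encodable.encode l < Encodable.encode (a :: l) := by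
  rw [Encodable.encode_list_cons]
  exact Nat.lt_succ_of_le (Nat.right_le_pair _ _)

theorem exists_isOneDegenerateRank_of_isAcyclic [Countable V] (hG : G.IsAcyclic) :
    ∃ rank, IsOneDegenerateRank G rank := by
  have := Encodable.ofCountable V
  obtain ⟨root, reachable_root, root_eq⟩ := exists_reachable_root_eq_of_adj G
  choose path isPath using fun v ↦ (reachable_root v).exists_isPath
  have support_injective : Injective fun v ↦ (path v).support := fun u v h ↦ by
    rw [← (path u).head_support, ← (path v).head_support]
    congr 1
  have support_eq_of_lt {v u : V} (hvu : G.Adj v u)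
      (hlt : Encodable.encode (path u).support < Encodable.encode (path v).support) :
      (path v).support = v :: (path u).support := by
    have hcons := support_eq_cons_or_support_eq_cons_of_adj hG hvu (isPath v)
      (q := (path u).copy rfl (root_eq v u hvu).symm) (by simpa using isPath u)
    rw [Walk.support_copy] at hcons
    refine hcons.resolve_right fun h ↦ ?_
    rw [h] at hlt
    exact hlt.asymm (encode_lt_encode_cons _ _)
  refine ⟨fun v ↦ Encodable.encode (path v).support,
    Encodable.encode_injective.comp support_injective, fun v u w hvu hvw hu hw ↦ ?_⟩
  apply support_injective
  exact List.tail_eq_of_cons_eq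
    ((support_eq_of_lt hvu hu).symm.trans (support_eq_of_lt hvw hw))

theorem exists_injective_lt_iff_of_isAcyclic [Countable V] (hG : G.IsAcyclic)
    {below : V → V → Prop} (hbelow : ∀ u v, G.Adj u v → (below u v ↔ ¬ below v u)) :
    ∃ z : V → ℤ, Injective z ∧ ∀ u v, G.Adj u v → (z u < z v ↔ below u v) := by
  obtain ⟨rank, hrank⟩ := exists_isOneDegenerateRank_of_isAcyclic hG
  exact ⟨signedRank G rank below, signedRank_injective hrank.injective,
    fun _ _ ↦ hrank.signedRank_lt_iff_of_adj hbelow⟩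

theorem tree_sign_height_assignment_general [Countable V] (hG : G.IsAcyclic)
    (positive : Set (Sym2 V)) :
    ∃ (s : V → Bool) (z : V → ℤ),
      Injective z ∧
      (∀ u v : V, G.Adj u v → s u ≠ s v) ∧
      (∀ u v : V, G.Adj u v → s u = true → s v = false →
        (z u < z v ↔ s(u, v) ∈ positive)) := by
  let s : G.Coloring Bool := hG.colorable_two.toColoring (by simp)
  have below_iff (u v : V) (huv : G.Adj u v) :
      (s u = true ↔ s(u, v) ∈ positive) ↔ ¬ (s v = true ↔ s(v, u) ∈ positive) := by
    have s_eq : s u = !s v := Bool.eq_not_of_ne (s.valid huv)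
    rw [Sym2.eq_swap (a := v), s_eq]
    cases s v <;> simp
  obtain ⟨z, z_injective, z_lt_iff⟩ := exists_injective_lt_iff_of_isAcyclic hG below_iff
  refine ⟨s, z, z_injective, fun _ _ ↦ s.valid, fun u v huv hu _ ↦ ?_⟩
  simpa only [hu, true_iff] using z_lt_iff u v huv

end Forest

/-- **Height assignments for a sign-labeled tree (conditions (★)).**
Let `T` be a finite tree with each edge labeled by a sign `+1` or `-1`.  Then there are
a proper 2-coloring `s : V → Bool` of the vertices and an injective height function
`z : V → ℤ` such that for every edge `{u, v}` with `s u = true` and `s v = false`,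
one has `z u < z v` exactly when the edge is labeled `+1`. -/
theorem tree_sign_height_assignment {V : Type*} [Fintype V] [DecidableEq V]
    (G : SimpleGraph V) [DecidableRel G.Adj] (hT : G.IsTree)
    (ε : Sym2 V → ℤ) (hε : ∀ e ∈ G.edgeSet, ε e = 1 ∨ ε e = -1) :
    ∃ (s : V → Bool) (z : V → ℤ),
      Function.Injective z ∧
      (∀ u v : V, G.Adj u v → s u ≠ s v) ∧
      (∀ u v : V, G.Adj u v → s u = true → s v = false →
        (z u < z v ↔ ε s(u, v) = 1)) := by
  exact tree_sign_height_assignment_general hT.isAcyclic {e | ε e = 1}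
end
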